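/- Let N ≥ 1 and n ≥ 2 be integers. Let A be an N×N matrix over ℂ((t)) with A.coeff m = 0 for all m < −n and with A.coeff(−n) a non-nilpotent complex matrix. Let λ : Fin N → ℤ and let g be the diagonal matrix over ℂ((t)) with diagonal entries t^{λ i}. Then the gauge transform B = g·A·g⁻¹ − g′·g⁻¹ (whose entries are B i j = t^{λ i − λ j}·(A i j) − δ_{ij}·λ i·t^{−1}) has order of singularity at least n; that is, there exist m ≤ −n and indices i, j with (B i j).coeff m ≠ 0. (This is the key reduction step, to gauge transformation by a coweight t^λ, in the proof of the paper's Lemma 'order of singularity'.) -/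

import Mathlib

open scoped Classical

/-- The formal derivative of a formal Laurent series: `f′.coeff m = (m+1) • f.coeff (m+1)`. -/
noncomputable def lderiv (f : LaurentSeries ℂ) : LaurentSeries ℂ where
  coeff m := ((m + 1 : ℤ) : ℂ) * f.coeff (m + 1)
  isPWO_support' := by
    have h : (Function.support fun m : ℤ => ((m + 1 : ℤ) : ℂ) * f.coeff (m + 1)) ⊆
        (fun m : ℤ => m - 1) '' f.support := by
      intro m hm
      have : f.coeff (m + 1) ≠ 0 := by
        intro h0
        apply hm
        simp [Function.mem_support, h0]
      exact ⟨m + 1, this, by ring⟩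
    exact (f.isPWO_support.image_of_monotone fun a b hab => by omega).mono h

/-- The matrix of `m`-th coefficients of a matrix of Laurent series. -/
noncomputable def mcoeff {N : ℕ} (A : Matrix (Fin N) (Fin N) (LaurentSeries ℂ)) (m : ℤ) :
    Matrix (Fin N) (Fin N) ℂ :=
  Matrix.of fun i j => (A i j).coeff m

/-- Entrywise formal derivative of a matrix of Laurent series. -/
noncomputable def mderiv {N : ℕ} (A : Matrix (Fin N) (Fin N) (LaurentSeries ℂ)) :
    Matrix (Fin N) (Fin N) (LaurentSeries ℂ) :=
  A.map lderiv

theorem nilp_of_strict {N : ℕ} (M : Matrix (Fin N) (Fin N) ℂ) (lam : Fin N → ℤ)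
    (h : ∀ i j, lam i ≤ lam j → M i j = 0) : IsNilpotent M := by
  have key : ∀ k : ℕ, ∀ i j, lam i < lam j + k → (M ^ k) i j = 0 := by
    intro k
    induction k with
    | zero =>
      intro i j hij
      have : i ≠ j := by
        rintro rfl
        simp at hij
      simp [this]
    | succ k ih =>
      intro i j hij
      rw [pow_succ, Matrix.mul_apply]
      apply Finset.sum_eq_zero
      intro l _
      by_cases hl : lam l ≤ lam j
      · rw [h l j hl, mul_zero]
      · rw [ih i l (by push_cast at hij; omega), zero_mul]
  have hb : ∀ i, |lam i| ≤ ∑ l, |lam l| := fun i =>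
    Finset.single_le_sum (f := fun l => |lam l|) (fun l _ => abs_nonneg _) (Finset.mem_univ i)
  refine ⟨(2 * (∑ l, |lam l|) + 1).toNat, ?_⟩
  ext i j
  apply key
  have h1 := hb i
  have h2 := hb j
  have h3 := le_abs_self (lam i)
  have h4 := neg_abs_le (lam j)
  have h5 := Int.self_le_toNat (2 * (∑ l, |lam l|) + 1)
  omega

/-- Gauge transformation by a coweight `t^λ` cannot lower the order of singularity
of an operator of order `n ≥ 2` with non-nilpotent polar part. -/
theorem gauge_by_coweight_order_of_singularity
    (N : ℕ) (hN : 1 ≤ N) (n : ℤ) (hn : 2 ≤ n)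
    (A : Matrix (Fin N) (Fin N) (LaurentSeries ℂ))
    (hA : ∀ m : ℤ, m < -n → mcoeff A m = 0)
    (hnonnilp : ¬ IsNilpotent (mcoeff A (-n)))
    (lam : Fin N → ℤ)
    (g : Matrix (Fin N) (Fin N) (LaurentSeries ℂ))
    (hg : g = Matrix.diagonal fun i => (HahnSeries.single (lam i) (1 : ℂ) : LaurentSeries ℂ))
    (B : Matrix (Fin N) (Fin N) (LaurentSeries ℂ))
    (hB : B = g * A * g⁻¹ - (mderiv g) * g⁻¹) :
    ∃ m : ℤ, m ≤ -n ∧ ∃ i j : Fin N, (B i j).coeff m ≠ 0 := by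
  by_contra hcon
  push Not at hcon
  apply hnonnilp
  apply nilp_of_strict _ lam
  intro i j hij
  have hginv : g⁻¹ = Matrix.diagonal
      fun i => (HahnSeries.single (-lam i) (1 : ℂ) : LaurentSeries ℂ) := by
    apply Matrix.inv_eq_right_inv
    rw [hg, Matrix.diagonal_mul_diagonal]
    simp [HahnSeries.single_mul_single]
  have h := hcon (-n + lam i - lam j) (by omega) i j
  have hd : ((mderiv g * g⁻¹) i j).coeff (-n + lam i - lam j) = 0 := by
    have e2 : (-n + lam i - lam j : ℤ) = (-n + lam i) + (-lam j) := by ring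
    rw [hginv, Matrix.mul_diagonal, e2, HahnSeries.coeff_mul_single_add, mul_one, hg]
    change ((-n + lam i + 1 : ℤ) : ℂ) * (Matrix.diagonal
      (fun i => (HahnSeries.single (lam i) (1 : ℂ) : LaurentSeries ℂ)) i j).coeff
        (-n + lam i + 1) = 0
    by_cases hne : i = j
    · subst hne
      rw [Matrix.diagonal_apply_eq, HahnSeries.coeff_single_of_ne (by omega), mul_zero]
    · simp [Matrix.diagonal_apply_ne _ hne]
  rw [hB, Matrix.sub_apply, HahnSeries.coeff_sub, hd, sub_zero, hginv, hg,
    Matrix.mul_diagonal, Matrix.diagonal_mul] at h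
  have e1 : (-n + lam i - lam j : ℤ) = (-n + lam i) + (-lam j) := by ring
  rw [e1, HahnSeries.coeff_mul_single_add, mul_one, HahnSeries.coeff_single_mul_add, one_mul] at h
  exact h
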